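/- Assume ρ is first order separable, i.e. ρ(y,u)·E(N) = ρ₁(y)ρ₂(u) for all (y,u). Then the following are equivalent: (i) there exist measurable functions k₁ : ℝ^d×ℝ^d → [0,∞) and k₂ : S^k×S^k → [0,∞) such that g(y₁,u₁,y₂,u₂) = k₁(y₁,y₂)·k₂(u₁,u₂) whenever ρ(y₁,u₁)ρ(y₂,u₂) > 0 (second order separability); (ii) g(y₁,u₁,y₂,u₂) = β·g₁(y₁,y₂)·g₂(u₁,u₂) whenever ρ(y₁,u₁)ρ(y₂,u₂) > 0. -/

import Mathlib

open MeasureTheory Real Set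
open scoped ENNReal NNReal RealInnerProductSpace Classical

noncomputable section

/-- `d`-dimensional Euclidean space. -/
abbrev Eucl (d : ℕ) : Type := EuclideanSpace ℝ (Fin d)

/-- The unit `k`-sphere in `ℝ^{k+1}`. -/
abbrev Sph (k : ℕ) : Type := Metric.sphere (0 : EuclideanSpace ℝ (Fin (k+1))) 1

/-- The surface measure `ν` on the `k`-sphere: the `k`-dimensional Hausdorff measure. -/
noncomputable def sphMeasure (k : ℕ) : Measure (Sph k) := μH[k]

/-- The geodesic distance `d(u,v) = arccos ⟨u,v⟩` on the `k`-sphere. -/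
noncomputable def gd {k : ℕ} (u v : Sph k) : ℝ :=
  Real.arccos ⟪(u : EuclideanSpace ℝ (Fin (k+1))), (v : EuclideanSpace ℝ (Fin (k+1)))⟫

variable {d k : ℕ}

/-- The product measure `μ` on `ℝ^d × S^k` restricted to `W × S^k`. -/
noncomputable def muW (W : Set (Eucl d)) (k : ℕ) : Measure (Eucl d × Sph k) :=
  ((volume : Measure (Eucl d)).restrict W).prod (sphMeasure k)

/-- Marginal spatial intensity `ρ₁(y) = ∫_{S^k} ρ(y,u) dν(u)`. -/
noncomputable def rho1 (ρ : Eucl d × Sph k → ℝ≥0) (y : Eucl d) : ℝ≥0∞ :=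
  ∫⁻ u, (ρ (y, u) : ℝ≥0∞) ∂(sphMeasure k)

/-- Marginal spherical intensity `ρ₂(u) = ∫_W ρ(y,u) dy`. -/
noncomputable def rho2 (W : Set (Eucl d)) (ρ : Eucl d × Sph k → ℝ≥0) (u : Sph k) : ℝ≥0∞ :=
  ∫⁻ y in W, (ρ (y, u) : ℝ≥0∞)

/-- The expected number of points `E(N) = ∫_{W × S^k} ρ dμ`. -/
noncomputable def meanN (W : Set (Eucl d)) (ρ : Eucl d × Sph k → ℝ≥0) : ℝ≥0∞ :=
  ∫⁻ p, (ρ p : ℝ≥0∞) ∂(muW W k)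

/-- The pair correlation function `g₁` of the spatial components. -/
noncomputable def gfun1 (ρ : Eucl d × Sph k → ℝ≥0)
    (g : Eucl d × Sph k → Eucl d × Sph k → ℝ≥0) (y₁ y₂ : Eucl d) : ℝ≥0∞ :=
  if 0 < rho1 ρ y₁ * rho1 ρ y₂ then
    (∫⁻ u₁, (∫⁻ u₂, ((ρ (y₁, u₁) : ℝ≥0∞) * (ρ (y₂, u₂) : ℝ≥0∞) *
        (g (y₁, u₁) (y₂, u₂) : ℝ≥0∞)) ∂(sphMeasure k)) ∂(sphMeasure k))
      / (rho1 ρ y₁ * rho1 ρ y₂)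
  else 0

/-- The pair correlation function `g₂` of the spherical components. -/
noncomputable def gfun2 (W : Set (Eucl d)) (ρ : Eucl d × Sph k → ℝ≥0)
    (g : Eucl d × Sph k → Eucl d × Sph k → ℝ≥0) (u₁ u₂ : Sph k) : ℝ≥0∞ :=
  if 0 < rho2 W ρ u₁ * rho2 W ρ u₂ then
    (∫⁻ y₁ in W, ∫⁻ y₂ in W, ((ρ (y₁, u₁) : ℝ≥0∞) * (ρ (y₂, u₂) : ℝ≥0∞) *
        (g (y₁, u₁) (y₂, u₂) : ℝ≥0∞)))
      / (rho2 W ρ u₁ * rho2 W ρ u₂)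
  else 0

/-- The second factorial moment `E{N(N−1)}`. -/
noncomputable def momN2 (W : Set (Eucl d)) (ρ : Eucl d × Sph k → ℝ≥0)
    (g : Eucl d × Sph k → Eucl d × Sph k → ℝ≥0) : ℝ≥0∞ :=
  ∫⁻ p, (∫⁻ q, ((ρ p : ℝ≥0∞) * (ρ q : ℝ≥0∞) * (g p q : ℝ≥0∞)) ∂(muW W k)) ∂(muW W k)

/-- The constant `β = E(N)² / E{N(N−1)}`. -/
noncomputable def betaC (W : Set (Eucl d)) (ρ : Eucl d × Sph k → ℝ≥0)
    (g : Eucl d × Sph k → Eucl d × Sph k → ℝ≥0) : ℝ≥0∞ :=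
  (meanN W ρ) ^ 2 / momN2 W ρ g

/-!
If `ρ = ρ₁ ⊗ ρ₂ / E(N)` and `g = k₁ ⊗ k₂` on the support of `ρ ⊗ ρ`, then `ρ(p) ρ(q) g(p, q)` is,
up to the factor `E(N)⁻²`, the product of `ρ₁(y₁) ρ₁(y₂) k₁(y₁, y₂)` and
`ρ₂(u₁) ρ₂(u₂) k₂(u₁, u₂)`. Writing `A` and `B` for the double integrals of these two factors,
Tonelli's theorem gives `g₁ = E(N)⁻² k₁ B`, `g₂ = E(N)⁻² k₂ A` and `E{N(N-1)} = E(N)⁻² A B`, so `A`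
and `B` cancel and `β g₁ g₂ = k₁ k₂`. Conversely `β g₁` and `g₂` are themselves measurable kernels.

Tonelli's theorem needs the surface measure to be s-finite. It is even finite: the sphere is
compact, and inverse stereographic projection is locally Lipschitz.
-/

section HausdorffMeasureSphere

open Module Metric Topology

theorem finiteAtFilter_hausdorffMeasure_of_locallyLipschitz {X Y : Type*} [EMetricSpace X]
    [EMetricSpace Y] [MeasurableSpace X] [BorelSpace X] [MeasurableSpace Y] [BorelSpace Y]
    {r : ℝ} (hr : 0 ≤ r) [IsLocallyFiniteMeasure (μH[r] : Measure X)] {f : X → Y}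
    (hf : LocallyLipschitz f) (hfo : IsOpenMap f) (x : X) :
    (μH[r] : Measure Y).FiniteAtFilter (𝓝 (f x)) := by
  obtain ⟨K, t, ht, hK⟩ := hf x
  obtain ⟨s, hs, hs_fin⟩ := (μH[r] : Measure X).finiteAt_nhds x
  refine ⟨f '' (t ∩ s), hfo.image_mem_nhds (Filter.inter_mem ht hs), ?_⟩
  calc μH[r] (f '' (t ∩ s)) ≤ (K : ℝ≥0∞) ^ r * μH[r] (t ∩ s) :=
        (hK.mono inter_subset_left).hausdorffMeasure_image_le hr
    _ ≤ (K : ℝ≥0∞) ^ r * μH[r] s := by gcongr; exact inter_subset_right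
    _ < ⊤ := ENNReal.mul_lt_top (ENNReal.rpow_lt_top_of_nonneg hr ENNReal.coe_ne_top) hs_fin

variable {E : Type*} [NormedAddCommGroup E] [InnerProductSpace ℝ E]

theorem locallyLipschitz_stereographic_symm {v : E} (hv : ‖v‖ = 1) :
    LocallyLipschitz (stereographic hv).symm := by
  have h_coe : ContDiff ℝ 1 fun w : (ℝ ∙ v)ᗮ ↦ stereoInvFunAux v (w : E) :=
    contDiff_stereoInvFunAux.comp (ℝ ∙ v)ᗮ.subtypeL.contDiff
  exact h_coe.locallyLipschitz

variable [MeasurableSpace E] [BorelSpace E]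

theorem isFiniteMeasure_hausdorffMeasure_sphere (n : ℕ) [Fact (finrank ℝ E = n + 1)] :
    IsFiniteMeasure (μH[n] : Measure (sphere (0 : E) 1)) := by
  have : FiniteDimensional ℝ E := .of_fact_finrank_eq_succ n
  suffices IsLocallyFiniteMeasure (μH[n] : Measure (sphere (0 : E) 1)) from inferInstance
  refine ⟨fun x ↦ ?_⟩
  have h_norm : ‖((-x : sphere (0 : E) 1) : E)‖ = 1 := norm_eq_of_mem_sphere (-x)
  have h_source : x ∈ (stereographic h_norm).source := ne_neg_of_mem_unit_sphere ℝ x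
  have h_finrank := Submodule.finrank_orthogonal_span_singleton (𝕜 := ℝ) (n := n)
    (ne_zero_of_mem_unit_sphere (-x))
  have : IsLocallyFiniteMeasure (μH[n] : Measure (ℝ ∙ ((-x : sphere (0 : E) 1) : E))ᗮ) := by
    rw [← h_finrank]
    infer_instance
  have h_fin := finiteAtFilter_hausdorffMeasure_of_locallyLipschitz n.cast_nonneg
    (locallyLipschitz_stereographic_symm h_norm)
    (isOpenEmbedding_stereographic_symm h_norm).isOpenMap (stereographic h_norm x)
  rwa [(stereographic h_norm).left_inv h_source] at h_fin

instance isFiniteMeasure_sphMeasure (k : ℕ) : IsFiniteMeasure (sphMeasure k) :=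
  have : Fact (finrank ℝ (EuclideanSpace ℝ (Fin (k + 1))) = k + 1) := ⟨finrank_euclideanSpace_fin⟩
  isFiniteMeasure_hausdorffMeasure_sphere k

end HausdorffMeasureSphere

section PairMoment

variable {X Y : Type*} [MeasurableSpace X] [MeasurableSpace Y]

/-- The double integral of a kernel `κ` against the weights `f₁` and `f₂`, in the form shared by
second factorial moments and by the numerators of marginal pair correlation functions. -/
def pairMoment (μ : Measure X) (f₁ f₂ : X → ℝ≥0∞) (κ : X → X → ℝ≥0∞) : ℝ≥0∞ :=
  ∫⁻ x₁, ∫⁻ x₂, f₁ x₁ * f₂ x₂ * κ x₁ x₂ ∂μ ∂μ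

theorem measurable_pairMoment {Z : Type*} [MeasurableSpace Z] (μ : Measure X) [SFinite μ]
    {f₁ f₂ : Z → X → ℝ≥0∞} {κ : Z → X → X → ℝ≥0∞} (hf₁ : Measurable (Function.uncurry f₁))
    (hf₂ : Measurable (Function.uncurry f₂))
    (hκ : Measurable fun w : (Z × X) × X ↦ κ w.1.1 w.1.2 w.2) :
    Measurable fun z ↦ pairMoment μ (f₁ z) (f₂ z) (κ z) := by
  have h_integrand : Measurable fun w : (Z × X) × X ↦
      f₁ w.1.1 w.1.2 * f₂ w.1.1 w.2 * κ w.1.1 w.1.2 w.2 :=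
    ((hf₁.comp measurable_fst).mul
      (hf₂.comp (by fun_prop : Measurable fun w : (Z × X) × X ↦ (w.1.1, w.2)))).mul hκ
  exact h_integrand.lintegral_prod_right'.lintegral_prod_right'

variable {μ : Measure X} {ν : Measure Y} {f₁ f₂ : X → ℝ≥0∞} {κ : X → X → ℝ≥0∞}

theorem pairMoment_const_mul [SFinite μ] (hf₁ : Measurable f₁) (hf₂ : Measurable f₂)
    (hκ : Measurable (Function.uncurry κ)) (c₁ c₂ c : ℝ≥0∞) :
    pairMoment μ (fun x ↦ c₁ * f₁ x) (fun x ↦ c₂ * f₂ x) (fun x₁ x₂ ↦ c * κ x₁ x₂) =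
      c₁ * c₂ * c * pairMoment μ f₁ f₂ κ := by
  have h_integrand : Measurable fun p : X × X ↦ f₁ p.1 * f₂ p.2 * κ p.1 p.2 :=
    ((hf₁.comp measurable_fst).mul (hf₂.comp measurable_snd)).mul hκ
  have h_factor (x₁ x₂ : X) : c₁ * f₁ x₁ * (c₂ * f₂ x₂) * (c * κ x₁ x₂) =
      c₁ * c₂ * c * (f₁ x₁ * f₂ x₂ * κ x₁ x₂) := by ring
  simp only [pairMoment, h_factor]
  rw [← lintegral_const_mul _ h_integrand.lintegral_prod_right']
  exact lintegral_congr fun x₁ ↦ lintegral_const_mul _ (h_integrand.comp measurable_prodMk_left)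

theorem pairMoment_prod_mul [SFinite μ] [SFinite ν] {h₁ h₂ : Y → ℝ≥0∞} {l : Y → Y → ℝ≥0∞}
    (hf₁ : Measurable f₁) (hf₂ : Measurable f₂) (hκ : Measurable (Function.uncurry κ))
    (hh₁ : Measurable h₁) (hh₂ : Measurable h₂) (hl : Measurable (Function.uncurry l)) :
    pairMoment (μ.prod ν) (fun p ↦ f₁ p.1 * h₁ p.2) (fun p ↦ f₂ p.1 * h₂ p.2)
        (fun p q ↦ κ p.1 q.1 * l p.2 q.2) =
      pairMoment μ f₁ f₂ κ * pairMoment ν h₁ h₂ l := by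
  have hF : Measurable fun p : X × X ↦ f₁ p.1 * f₂ p.2 * κ p.1 p.2 :=
    ((hf₁.comp measurable_fst).mul (hf₂.comp measurable_snd)).mul hκ
  have hH : Measurable fun p : Y × Y ↦ h₁ p.1 * h₂ p.2 * l p.1 p.2 :=
    ((hh₁.comp measurable_fst).mul (hh₂.comp measurable_snd)).mul hl
  have h_factor (p q : X × Y) :
      f₁ p.1 * h₁ p.2 * (f₂ q.1 * h₂ q.2) * (κ p.1 q.1 * l p.2 q.2) =
        f₁ p.1 * f₂ q.1 * κ p.1 q.1 * (h₁ p.2 * h₂ q.2 * l p.2 q.2) := by ring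
  have h_inner (p : X × Y) :
      ∫⁻ q, f₁ p.1 * f₂ q.1 * κ p.1 q.1 * (h₁ p.2 * h₂ q.2 * l p.2 q.2) ∂μ.prod ν =
        (∫⁻ x, f₁ p.1 * f₂ x * κ p.1 x ∂μ) * ∫⁻ y, h₁ p.2 * h₂ y * l p.2 y ∂ν :=
    lintegral_prod_mul (hF.comp measurable_prodMk_left).aemeasurable
      (hH.comp measurable_prodMk_left).aemeasurable
  simp only [pairMoment, h_factor, h_inner]
  exact lintegral_prod_mul hF.lintegral_prod_right'.aemeasurable
    hH.lintegral_prod_right'.aemeasurable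

end PairMoment

section Factorization

variable {X Y : Type*} {ρ : X × Y → ℝ≥0} {g : X × Y → X × Y → ℝ≥0} {k₁ : X → X → ℝ≥0∞}
  {k₂ : Y → Y → ℝ≥0∞}

/-- The pair correlation function `g` is the product of the kernels `k₁` and `k₂` wherever
`ρ ⊗ ρ > 0`. The kernels may take the value `∞`, as marginal pair correlation functions do. -/
def FactorsOnSupport (ρ : X × Y → ℝ≥0) (g : X × Y → X × Y → ℝ≥0) (k₁ : X → X → ℝ≥0∞)
    (k₂ : Y → Y → ℝ≥0∞) : Prop :=
  ∀ x₁ x₂ y₁ y₂, 0 < ρ (x₁, y₁) * ρ (x₂, y₂) →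
    (g (x₁, y₁) (x₂, y₂) : ℝ≥0∞) = k₁ x₁ x₂ * k₂ y₁ y₂

namespace FactorsOnSupport

theorem swap (h : FactorsOnSupport ρ g k₁ k₂) :
    FactorsOnSupport (ρ ∘ Prod.swap) (fun p q ↦ g p.swap q.swap) k₂ k₁ :=
  fun y₁ y₂ x₁ x₂ h_pos ↦ (h x₁ x₂ y₁ y₂ h_pos).trans (mul_comm _ _)

theorem mul_mul_eq (h : FactorsOnSupport ρ g k₁ k₂) (p q : X × Y) :
    (ρ p * ρ q * g p q : ℝ≥0∞) = ρ p * ρ q * (k₁ p.1 q.1 * k₂ p.2 q.2) := by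
  rcases eq_or_ne (ρ p * ρ q) 0 with h_zero | h_ne
  · simp [← ENNReal.coe_mul, h_zero]
  · rw [h _ _ _ _ (pos_iff_ne_zero.2 h_ne)]

end FactorsOnSupport

end Factorization

section Separability

variable {X Y : Type*} [MeasurableSpace X] [MeasurableSpace Y]

/-- The mean number of points `∫ ρ dμ` of a point process with intensity `ρ`. -/
def totalIntensity {Z : Type*} [MeasurableSpace Z] (μ : Measure Z) (ρ : Z → ℝ≥0) : ℝ≥0∞ :=
  ∫⁻ z, ρ z ∂μ

/-- The second factorial moment `∬ ρ(z₁) ρ(z₂) g(z₁, z₂) dμ(z₁) dμ(z₂)` of the number of points of a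
point process with intensity `ρ` and pair correlation function `g`. -/
def secondFactorialMoment {Z : Type*} [MeasurableSpace Z] (μ : Measure Z) (ρ : Z → ℝ≥0)
    (g : Z → Z → ℝ≥0) : ℝ≥0∞ :=
  pairMoment μ (fun z ↦ ρ z) (fun z ↦ ρ z) (fun z₁ z₂ ↦ g z₁ z₂)

/-- The intensity of the first components, `x ↦ ∫ ρ(x, y) dν(y)`. The marginal of the second
components is obtained by applying this to `ρ ∘ Prod.swap`. -/
def marginalIntensity (ν : Measure Y) (ρ : X × Y → ℝ≥0) (x : X) : ℝ≥0∞ :=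
  ∫⁻ y, ρ (x, y) ∂ν

/-- The pair correlation function of the first components, set to `0` where the marginal intensity
vanishes. That of the second components is obtained by swapping the factors in `ρ` and `g`. -/
def marginalPairCorrelation (ν : Measure Y) (ρ : X × Y → ℝ≥0) (g : X × Y → X × Y → ℝ≥0)
    (x₁ x₂ : X) : ℝ≥0∞ :=
  if 0 < marginalIntensity ν ρ x₁ * marginalIntensity ν ρ x₂ then
    pairMoment ν (fun y ↦ ρ (x₁, y)) (fun y ↦ ρ (x₂, y)) (fun y₁ y₂ ↦ g (x₁, y₁) (x₂, y₂)) /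
      (marginalIntensity ν ρ x₁ * marginalIntensity ν ρ x₂)
  else 0

/-- First order separability: the intensity is the normalised product of its marginals. -/
def IsFirstOrderSeparable (μ : Measure X) (ν : Measure Y) (ρ : X × Y → ℝ≥0) : Prop :=
  ∀ x y, (ρ (x, y) : ℝ≥0∞) * totalIntensity (μ.prod ν) ρ =
    marginalIntensity ν ρ x * marginalIntensity μ (ρ ∘ Prod.swap) y

/-- Second order separability: on the support of `ρ ⊗ ρ`, the pair correlation function is a product
of finite measurable kernels. -/
def IsSecondOrderSeparable (ρ : X × Y → ℝ≥0) (g : X × Y → X × Y → ℝ≥0) : Prop :=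
  ∃ (k₁ : X → X → ℝ≥0) (k₂ : Y → Y → ℝ≥0),
    Measurable (Function.uncurry k₁) ∧ Measurable (Function.uncurry k₂) ∧
    ∀ x₁ x₂ y₁ y₂, 0 < ρ (x₁, y₁) * ρ (x₂, y₂) →
      g (x₁, y₁) (x₂, y₂) = k₁ x₁ x₂ * k₂ y₁ y₂

variable {μ : Measure X} {ν : Measure Y} {ρ : X × Y → ℝ≥0} {g : X × Y → X × Y → ℝ≥0}
  {k₁ : X → X → ℝ≥0∞} {k₂ : Y → Y → ℝ≥0∞}

theorem measurable_marginalIntensity [SFinite ν] (hρ : Measurable ρ) :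
    Measurable (marginalIntensity ν ρ) :=
  hρ.coe_nnreal_ennreal.lintegral_prod_right'

theorem measurable_marginalPairCorrelation [SFinite ν] (hρ : Measurable ρ)
    (hg : Measurable (Function.uncurry g)) :
    Measurable (Function.uncurry (marginalPairCorrelation ν ρ g)) := by
  have h_denom : Measurable fun z : X × X ↦ marginalIntensity ν ρ z.1 * marginalIntensity ν ρ z.2 :=
    ((measurable_marginalIntensity hρ).comp measurable_fst).mul
      ((measurable_marginalIntensity hρ).comp measurable_snd)
  have h_num : Measurable fun z : X × X ↦ pairMoment ν (fun y ↦ ρ (z.1, y)) (fun y ↦ ρ (z.2, y))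
      (fun y₁ y₂ ↦ g (z.1, y₁) (z.2, y₂)) := by
    refine measurable_pairMoment ν (hρ.comp ?_).coe_nnreal_ennreal
      (hρ.comp ?_).coe_nnreal_ennreal (hg.comp
        (by fun_prop : Measurable fun w : ((X × X) × Y) × Y ↦
          ((w.1.1.1, w.1.2), (w.1.1.2, w.2)))).coe_nnreal_ennreal
    all_goals fun_prop
  exact Measurable.ite (measurableSet_lt measurable_const h_denom) (h_num.div h_denom)
    measurable_const

theorem totalIntensity_prod_swap [SFinite μ] [SFinite ν] :
    totalIntensity (ν.prod μ) (ρ ∘ Prod.swap) = totalIntensity (μ.prod ν) ρ :=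
  lintegral_prod_swap fun p ↦ (ρ p : ℝ≥0∞)

theorem lintegral_marginalIntensity [SFinite ν] (hρ : Measurable ρ) :
    ∫⁻ x, marginalIntensity ν ρ x ∂μ = totalIntensity (μ.prod ν) ρ :=
  (lintegral_prod _ hρ.coe_nnreal_ennreal.aemeasurable).symm

namespace IsFirstOrderSeparable

theorem swap [SFinite μ] [SFinite ν] (h : IsFirstOrderSeparable μ ν ρ) :
    IsFirstOrderSeparable ν μ (ρ ∘ Prod.swap) := fun y x ↦ by
  rw [totalIntensity_prod_swap, mul_comm (marginalIntensity _ _ _)]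
  exact h x y

theorem coe_eq_mul (h : IsFirstOrderSeparable μ ν ρ) (h₀ : totalIntensity (μ.prod ν) ρ ≠ 0)
    (h_fin : totalIntensity (μ.prod ν) ρ ≠ ⊤) (p : X × Y) :
    (ρ p : ℝ≥0∞) = (totalIntensity (μ.prod ν) ρ)⁻¹ * marginalIntensity ν ρ p.1 *
      marginalIntensity μ (ρ ∘ Prod.swap) p.2 := by
  rw [mul_assoc, ← h p.1 p.2, mul_comm, ENNReal.mul_inv_cancel_right h₀ h_fin]

theorem marginalIntensity_ne_zero (h : IsFirstOrderSeparable μ ν ρ)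
    (h₀ : totalIntensity (μ.prod ν) ρ ≠ 0) {x : X} {y : Y} (hxy : ρ (x, y) ≠ 0) :
    marginalIntensity ν ρ x ≠ 0 :=
  left_ne_zero_of_mul (h x y ▸ mul_ne_zero (ENNReal.coe_ne_zero.2 hxy) h₀)

theorem marginalIntensity_ne_top [SFinite μ] [SFinite ν] (h : IsFirstOrderSeparable μ ν ρ)
    (hρ : Measurable ρ) (h₀ : totalIntensity (μ.prod ν) ρ ≠ 0)
    (h_fin : totalIntensity (μ.prod ν) ρ ≠ ⊤) (x : X) : marginalIntensity ν ρ x ≠ ⊤ := by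
  obtain ⟨y, hy⟩ : ∃ y, marginalIntensity μ (ρ ∘ Prod.swap) y ≠ 0 := by
    by_contra! h_zero
    rw [← totalIntensity_prod_swap, ← lintegral_marginalIntensity (hρ.comp measurable_swap)] at h₀
    simp [h_zero] at h₀
  intro h_top
  have h_xy := h x y
  rw [h_top, ENNReal.top_mul hy] at h_xy
  exact ENNReal.mul_ne_top ENNReal.coe_ne_top h_fin h_xy

end IsFirstOrderSeparable

namespace FactorsOnSupport

theorem pairMoment_section_eq [SFinite μ] [SFinite ν] (h : FactorsOnSupport ρ g k₁ k₂)
    (hk₂ : Measurable (Function.uncurry k₂)) (hsep : IsFirstOrderSeparable μ ν ρ)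
    (hρ : Measurable ρ) (h₀ : totalIntensity (μ.prod ν) ρ ≠ 0)
    (h_fin : totalIntensity (μ.prod ν) ρ ≠ ⊤) (x₁ x₂ : X) :
    pairMoment ν (fun y ↦ ρ (x₁, y)) (fun y ↦ ρ (x₂, y)) (fun y₁ y₂ ↦ g (x₁, y₁) (x₂, y₂)) =
      (totalIntensity (μ.prod ν) ρ)⁻¹ ^ 2 * k₁ x₁ x₂ *
        pairMoment ν (marginalIntensity μ (ρ ∘ Prod.swap))
          (marginalIntensity μ (ρ ∘ Prod.swap)) k₂ *
        (marginalIntensity ν ρ x₁ * marginalIntensity ν ρ x₂) := by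
  have hρ₂ := measurable_marginalIntensity (ν := μ) (hρ.comp measurable_swap)
  set m := totalIntensity (μ.prod ν) ρ
  set ρ₁ := marginalIntensity ν ρ
  set ρ₂ := marginalIntensity μ (ρ ∘ Prod.swap)
  calc _ = pairMoment ν (fun y ↦ m⁻¹ * ρ₁ x₁ * ρ₂ y) (fun y ↦ m⁻¹ * ρ₁ x₂ * ρ₂ y)
          (fun y₁ y₂ ↦ k₁ x₁ x₂ * k₂ y₁ y₂) := by
        simp only [pairMoment, h.mul_mul_eq]
        simp only [hsep.coe_eq_mul h₀ h_fin, m, ρ₁, ρ₂]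
    _ = m⁻¹ * ρ₁ x₁ * (m⁻¹ * ρ₁ x₂) * k₁ x₁ x₂ * pairMoment ν ρ₂ ρ₂ k₂ :=
        pairMoment_const_mul hρ₂ hρ₂ hk₂ _ _ _
    _ = _ := by ring

theorem marginalPairCorrelation_eq [SFinite μ] [SFinite ν] (h : FactorsOnSupport ρ g k₁ k₂)
    (hk₂ : Measurable (Function.uncurry k₂)) (hsep : IsFirstOrderSeparable μ ν ρ)
    (hρ : Measurable ρ) (h₀ : totalIntensity (μ.prod ν) ρ ≠ 0)
    (h_fin : totalIntensity (μ.prod ν) ρ ≠ ⊤) {x₁ x₂ : X} {y₁ y₂ : Y} (h₁ : ρ (x₁, y₁) ≠ 0)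
    (h₂ : ρ (x₂, y₂) ≠ 0) :
    marginalPairCorrelation ν ρ g x₁ x₂ = (totalIntensity (μ.prod ν) ρ)⁻¹ ^ 2 * k₁ x₁ x₂ *
      pairMoment ν (marginalIntensity μ (ρ ∘ Prod.swap))
        (marginalIntensity μ (ρ ∘ Prod.swap)) k₂ := by
  have h_ne := mul_ne_zero (hsep.marginalIntensity_ne_zero h₀ h₁)
    (hsep.marginalIntensity_ne_zero h₀ h₂)
  have h_ne_top := ENNReal.mul_ne_top (hsep.marginalIntensity_ne_top hρ h₀ h_fin x₁)
    (hsep.marginalIntensity_ne_top hρ h₀ h_fin x₂)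
  rw [marginalPairCorrelation, if_pos (pos_iff_ne_zero.2 h_ne),
    h.pairMoment_section_eq hk₂ hsep hρ h₀ h_fin, ENNReal.mul_div_cancel_right h_ne h_ne_top]

theorem marginalPairCorrelation_swap_eq [SFinite μ] [SFinite ν] (h : FactorsOnSupport ρ g k₁ k₂)
    (hk₁ : Measurable (Function.uncurry k₁)) (hsep : IsFirstOrderSeparable μ ν ρ)
    (hρ : Measurable ρ) (h₀ : totalIntensity (μ.prod ν) ρ ≠ 0)
    (h_fin : totalIntensity (μ.prod ν) ρ ≠ ⊤) {x₁ x₂ : X} {y₁ y₂ : Y} (h₁ : ρ (x₁, y₁) ≠ 0)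
    (h₂ : ρ (x₂, y₂) ≠ 0) :
    marginalPairCorrelation μ (ρ ∘ Prod.swap) (fun p q ↦ g p.swap q.swap) y₁ y₂ =
      (totalIntensity (μ.prod ν) ρ)⁻¹ ^ 2 * k₂ y₁ y₂ *
        pairMoment μ (marginalIntensity ν ρ) (marginalIntensity ν ρ) k₁ := by
  rw [← totalIntensity_prod_swap] at h₀ h_fin ⊢
  exact h.swap.marginalPairCorrelation_eq hk₁ hsep.swap (hρ.comp measurable_swap) h₀ h_fin h₁ h₂

theorem secondFactorialMoment_prod_eq [SFinite μ] [SFinite ν] (h : FactorsOnSupport ρ g k₁ k₂)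
    (hk₁ : Measurable (Function.uncurry k₁)) (hk₂ : Measurable (Function.uncurry k₂))
    (hsep : IsFirstOrderSeparable μ ν ρ) (hρ : Measurable ρ)
    (h₀ : totalIntensity (μ.prod ν) ρ ≠ 0) (h_fin : totalIntensity (μ.prod ν) ρ ≠ ⊤) :
    secondFactorialMoment (μ.prod ν) ρ g =
      (totalIntensity (μ.prod ν) ρ)⁻¹ ^ 2 *
        (pairMoment μ (marginalIntensity ν ρ) (marginalIntensity ν ρ) k₁ *
          pairMoment ν (marginalIntensity μ (ρ ∘ Prod.swap))
            (marginalIntensity μ (ρ ∘ Prod.swap)) k₂) := by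
  have hρ₁ := measurable_marginalIntensity (ν := ν) hρ
  have hρ₂ := measurable_marginalIntensity (ν := μ) (hρ.comp measurable_swap)
  set m := totalIntensity (μ.prod ν) ρ
  set ρ₁ := marginalIntensity ν ρ
  set ρ₂ := marginalIntensity μ (ρ ∘ Prod.swap)
  calc _ = pairMoment (μ.prod ν) (fun p ↦ m⁻¹ * ρ₁ p.1 * ρ₂ p.2) (fun p ↦ m⁻¹ * ρ₁ p.1 * ρ₂ p.2)
          (fun p q ↦ k₁ p.1 q.1 * k₂ p.2 q.2) := by
        simp only [secondFactorialMoment, pairMoment, h.mul_mul_eq]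
        simp only [hsep.coe_eq_mul h₀ h_fin, m, ρ₁, ρ₂]
    _ = pairMoment μ (fun x ↦ m⁻¹ * ρ₁ x) (fun x ↦ m⁻¹ * ρ₁ x) k₁ * pairMoment ν ρ₂ ρ₂ k₂ :=
        pairMoment_prod_mul (hρ₁.const_mul _) (hρ₁.const_mul _) hk₁ hρ₂ hρ₂ hk₂
    _ = m⁻¹ * m⁻¹ * 1 * pairMoment μ ρ₁ ρ₁ k₁ * pairMoment ν ρ₂ ρ₂ k₂ := by
        rw [← pairMoment_const_mul hρ₁ hρ₁ hk₁]
        simp only [one_mul]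
    _ = _ := by ring

theorem factorsOnSupport_marginalPairCorrelation [SFinite μ] [SFinite ν]
    (h : FactorsOnSupport ρ g k₁ k₂) (hk₁ : Measurable (Function.uncurry k₁))
    (hk₂ : Measurable (Function.uncurry k₂))
    (hsep : IsFirstOrderSeparable μ ν ρ) (hρ : Measurable ρ)
    (h₀ : totalIntensity (μ.prod ν) ρ ≠ 0) (h_fin : totalIntensity (μ.prod ν) ρ ≠ ⊤)
    (hM₀ : secondFactorialMoment (μ.prod ν) ρ g ≠ 0)
    (hM_fin : secondFactorialMoment (μ.prod ν) ρ g ≠ ⊤) :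
    FactorsOnSupport ρ g
      (fun x₁ x₂ ↦ totalIntensity (μ.prod ν) ρ ^ 2 /
        secondFactorialMoment (μ.prod ν) ρ g *
        marginalPairCorrelation ν ρ g x₁ x₂)
      (marginalPairCorrelation μ (ρ ∘ Prod.swap) fun p q ↦ g p.swap q.swap) := by
  intro x₁ x₂ y₁ y₂ h_pos
  have hρ₁ : ρ (x₁, y₁) ≠ 0 := left_ne_zero_of_mul h_pos.ne'
  have hρ₂ : ρ (x₂, y₂) ≠ 0 := right_ne_zero_of_mul h_pos.ne'
  set m := totalIntensity (μ.prod ν) ρ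
  set M := secondFactorialMoment (μ.prod ν) ρ g
  set A := pairMoment μ (marginalIntensity ν ρ) (marginalIntensity ν ρ) k₁
  set B := pairMoment ν (marginalIntensity μ (ρ ∘ Prod.swap))
    (marginalIntensity μ (ρ ∘ Prod.swap)) k₂
  have h_M : M = m⁻¹ ^ 2 * (A * B) := h.secondFactorialMoment_prod_eq hk₁ hk₂ hsep hρ h₀ h_fin
  calc (g (x₁, y₁) (x₂, y₂) : ℝ≥0∞)
    _ = k₁ x₁ x₂ * k₂ y₁ y₂ := h x₁ x₂ y₁ y₂ h_pos
    _ = (m * m⁻¹) ^ 2 * (M * M⁻¹) * (k₁ x₁ x₂ * k₂ y₁ y₂) := by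
        rw [ENNReal.mul_inv_cancel h₀ h_fin, ENNReal.mul_inv_cancel hM₀ hM_fin, one_pow, one_mul,
          one_mul]
    _ = (m * m⁻¹) ^ 2 * (m⁻¹ ^ 2 * (A * B) * M⁻¹) * (k₁ x₁ x₂ * k₂ y₁ y₂) := by rw [← h_M]
    _ = m ^ 2 / M * (m⁻¹ ^ 2 * k₁ x₁ x₂ * B) * (m⁻¹ ^ 2 * k₂ y₁ y₂ * A) := by
        rw [div_eq_mul_inv]
        ring
    _ = m ^ 2 / M * marginalPairCorrelation ν ρ g x₁ x₂ *
          marginalPairCorrelation μ (ρ ∘ Prod.swap) (fun p q ↦ g p.swap q.swap) y₁ y₂ := by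
        rw [h.marginalPairCorrelation_eq hk₂ hsep hρ h₀ h_fin hρ₁ hρ₂,
          h.marginalPairCorrelation_swap_eq hk₁ hsep hρ h₀ h_fin hρ₁ hρ₂]

end FactorsOnSupport

theorem isSecondOrderSeparable_iff_exists_factorsOnSupport :
    IsSecondOrderSeparable ρ g ↔ ∃ (k₁ : X → X → ℝ≥0∞) (k₂ : Y → Y → ℝ≥0∞),
      Measurable (Function.uncurry k₁) ∧ Measurable (Function.uncurry k₂) ∧
      FactorsOnSupport ρ g k₁ k₂ := by
  constructor
  · rintro ⟨k₁, k₂, hk₁, hk₂, h⟩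
    refine ⟨fun x₁ x₂ ↦ k₁ x₁ x₂, fun y₁ y₂ ↦ k₂ y₁ y₂, hk₁.coe_nnreal_ennreal,
      hk₂.coe_nnreal_ennreal, fun x₁ x₂ y₁ y₂ h_pos ↦ ?_⟩
    rw [h x₁ x₂ y₁ y₂ h_pos, ENNReal.coe_mul]
  · rintro ⟨k₁, k₂, hk₁, hk₂, h⟩
    refine ⟨fun x₁ x₂ ↦ (k₁ x₁ x₂).toNNReal, fun y₁ y₂ ↦ (k₂ y₁ y₂).toNNReal,
      hk₁.ennreal_toNNReal, hk₂.ennreal_toNNReal, fun x₁ x₂ y₁ y₂ h_pos ↦ ?_⟩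
    rw [← ENNReal.toNNReal_mul, ← h x₁ x₂ y₁ y₂ h_pos, ENNReal.toNNReal_coe]

theorem second_order_separability_iff_general [SFinite μ] [SFinite ν] (hρ : Measurable ρ)
    (h₀ : totalIntensity (μ.prod ν) ρ ≠ 0) (h_fin : totalIntensity (μ.prod ν) ρ ≠ ⊤)
    (hsep : IsFirstOrderSeparable μ ν ρ) (hg : Measurable (Function.uncurry g))
    (hM₀ : secondFactorialMoment (μ.prod ν) ρ g ≠ 0)
    (hM_fin : secondFactorialMoment (μ.prod ν) ρ g ≠ ⊤) :
    IsSecondOrderSeparable ρ g ↔ FactorsOnSupport ρ g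
      (fun x₁ x₂ ↦ totalIntensity (μ.prod ν) ρ ^ 2 /
        secondFactorialMoment (μ.prod ν) ρ g *
        marginalPairCorrelation ν ρ g x₁ x₂)
      (marginalPairCorrelation μ (ρ ∘ Prod.swap) fun p q ↦ g p.swap q.swap) := by
  rw [isSecondOrderSeparable_iff_exists_factorsOnSupport]
  constructor
  · rintro ⟨k₁, k₂, hk₁, hk₂, h⟩
    exact h.factorsOnSupport_marginalPairCorrelation hk₁ hk₂ hsep hρ h₀ h_fin hM₀ hM_fin
  · have hg_swap : Measurable (Function.uncurry fun p q : Y × X ↦ g p.swap q.swap) :=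
      hg.comp (measurable_swap.prodMap measurable_swap)
    exact fun h ↦ ⟨_, _, (measurable_marginalPairCorrelation hρ hg).const_mul _,
      measurable_marginalPairCorrelation (hρ.comp measurable_swap) hg_swap, h⟩

end Separability

/-- Under first order separability, second order separability
`g = k₁·k₂` (on `{ρ ⊗ ρ > 0}`) is equivalent to `g = β·g₁·g₂` (on `{ρ ⊗ ρ > 0}`). -/
theorem second_order_separability_iff (d k : ℕ) (hd : 1 ≤ d) (hk : 1 ≤ k)
    (W : Set (Eucl d)) (hWm : MeasurableSet W) (hWb : Bornology.IsBounded W)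
    (ρ : Eucl d × Sph k → ℝ≥0) (hρ : Measurable ρ)
    (hEN₀ : 0 < meanN W ρ) (hEN₁ : meanN W ρ < ⊤)
    (hsep1 : ∀ (y : Eucl d) (u : Sph k),
      (ρ (y, u) : ℝ≥0∞) * meanN W ρ = rho1 ρ y * rho2 W ρ u)
    (g : Eucl d × Sph k → Eucl d × Sph k → ℝ≥0)
    (hg : Measurable (Function.uncurry g))
    (hg0 : ∀ p q : Eucl d × Sph k, ρ p * ρ q = 0 → g p q = 0)
    (hN2₀ : 0 < momN2 W ρ g) (hN2₁ : momN2 W ρ g < ⊤) :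
    (∃ (k₁ : Eucl d → Eucl d → ℝ≥0) (k₂ : Sph k → Sph k → ℝ≥0),
        Measurable (Function.uncurry k₁) ∧ Measurable (Function.uncurry k₂) ∧
        ∀ (y₁ y₂ : Eucl d) (u₁ u₂ : Sph k), 0 < ρ (y₁, u₁) * ρ (y₂, u₂) →
          g (y₁, u₁) (y₂, u₂) = k₁ y₁ y₂ * k₂ u₁ u₂) ↔
      (∀ (y₁ y₂ : Eucl d) (u₁ u₂ : Sph k), 0 < ρ (y₁, u₁) * ρ (y₂, u₂) →
        (g (y₁, u₁) (y₂, u₂) : ℝ≥0∞) =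
          betaC W ρ g * gfun1 ρ g y₁ y₂ * gfun2 W ρ g u₁ u₂) :=
  second_order_separability_iff_general hρ hEN₀.ne' hEN₁.ne hsep1 hg hN2₀.ne' hN2₁.ne
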